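/- Let q be a prime power and x = (x_1,…,x_n) arbitrary weights. Then for every coset gB ∈ G/B and every permutation π ∈ S_n: proj_{S_n}( gB · T_{G/B}(q,x) ) = proj_{S_n}(gB) · T_{S_n}(q,x), and incl_{G/B}( π · T_{S_n}(q,x) ) = incl_{G/B}(π) · T_{G/B}(q,x). That is, the projection and inclusion maps intertwine the q-Tsetlin library operators on ℂ[G/B] and on ℂS_n. -/

import Mathlib

/-!
For each adjacent pair of indices `i ⋖ i + 1`, the flag variety `G/B` is partitioned into projective
lines, the cosets of `B` contained in a common coset of the minimal parabolic subgroup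
`P_i = B ∪ B s_i B`. The operator `T_i + 1` sends a point to the sum of the `q + 1` points of its
line. If a line meets the cell `[π]` with `π_i < π_{i+1}`, then one of its points lies in
`[π s_i]` and the other `q` lie in `[π]`, so the projection carries `T_i + 1` on `ℂ[G/B]` to
the operator `π, π s_i ↦ π s_i + q π`, which is `T_i + 1` on `ℂS_n`.

The inclusion is handled by transposition. The matrix of `T_i` on `ℂ[G/B]` is symmetric because
lying on a common line is an equivalence relation, the matrix of `T_i` on `ℂS_n` is reversible with
respect to the weights `q^{inv(π)}`, and the matrix of the inclusion is the transpose of the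
matrix of the projection, rescaled by these weights.
-/

open scoped Classical
set_option synthInstance.maxHeartbeats 1000000
set_option maxHeartbeats 1000000

noncomputable section

namespace QTsetlin

/-- `M` is upper triangular. -/
def upperTri {F : Type} [Field F] {n : ℕ} (M : Matrix (Fin n) (Fin n) F) : Prop :=
  ∀ i j : Fin n, j < i → M i j = 0

/-- `M` is lower triangular. -/
def lowerTri {F : Type} [Field F] {n : ℕ} (M : Matrix (Fin n) (Fin n) F) : Prop :=
  ∀ i j : Fin n, i < j → M i j = 0

variable (F : Type) [Field F] [Fintype F] [DecidableEq F] (n : ℕ)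

/-- The general linear group `G = GL_n(F_q)`. -/
abbrev GLn := GL (Fin n) F

/-- The Borel subgroup `B` of invertible upper triangular matrices. -/
def Bsub : Subgroup (GLn F n) where
  carrier := {g | upperTri (g : Matrix (Fin n) (Fin n) F)}
  one_mem' := by
    intro i j hij
    simp [Matrix.one_apply, (Fin.ne_of_lt hij).symm]
  mul_mem' := by
    intro a b ha hb i j hij
    exact Matrix.BlockTriangular.mul ha hb hij
  inv_mem' := by
    intro a ha
    have hdet : IsUnit ((a : Matrix (Fin n) (Fin n) F).det) :=
      (Matrix.isUnit_iff_isUnit_det _).mp a.isUnit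
    have hinv : Invertible (a : Matrix (Fin n) (Fin n) F) :=
      Matrix.invertibleOfIsUnitDet _ hdet
    have h2 : ((a : Matrix (Fin n) (Fin n) F)⁻¹).BlockTriangular (id : Fin n → Fin n) :=
      Matrix.blockTriangular_inv_of_blockTriangular ha
    show upperTri ((a⁻¹ : GLn F n) : Matrix (Fin n) (Fin n) F)
    rw [show ((a⁻¹ : GLn F n) : Matrix (Fin n) (Fin n) F)
        = (a : Matrix (Fin n) (Fin n) F)⁻¹ from Matrix.coe_units_inv a]
    exact h2

/-- The set of cosets `G/B`. -/
abbrev Cosets := GLn F n ⧸ Bsub F n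

/-- permutation matrix of `π`: entry 1 in positions `(π j, j)`. -/
def permMat (π : Equiv.Perm (Fin n)) : Matrix (Fin n) (Fin n) F :=
  fun i j => if π j = i then 1 else 0

lemma permMat_mul (π σ : Equiv.Perm (Fin n)) :
    permMat F n π * permMat F n σ = permMat F n (π * σ) := by
  ext i j
  rw [Matrix.mul_apply]
  simp only [permMat, mul_ite, ite_mul, one_mul, mul_one, mul_zero, zero_mul]
  rw [Finset.sum_eq_single (σ j)]
  · by_cases h : π (σ j) = i <;> simp [Equiv.Perm.mul_apply, h]
  · intro k _ hk
    simp [hk.symm]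
  · simp

lemma permMat_one : permMat F n 1 = 1 := by
  ext i j
  simp [permMat, Matrix.one_apply, eq_comm]

/-- The permutation matrix of `π`, as an element of `GL_n(F)`. -/
def permGL (π : Equiv.Perm (Fin n)) : GLn F n :=
  ⟨permMat F n π, permMat F n π⁻¹,
    by rw [permMat_mul, mul_inv_cancel, permMat_one],
    by rw [permMat_mul, inv_mul_cancel, permMat_one]⟩

/-- `f_i(t)`: identity matrix with an extra entry `t` in position `(r, c)`, as an
element of `GL_n(F)`. -/
def transvGL (r c : Fin n) (h : r ≠ c) (t : F) : GLn F n :=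
  ⟨Matrix.transvection r c t, Matrix.transvection r c (-t),
    by rw [Matrix.transvection_mul_transvection_same _ _ h, add_neg_cancel,
      Matrix.transvection_zero],
    by rw [Matrix.transvection_mul_transvection_same _ _ h, neg_add_cancel,
      Matrix.transvection_zero]⟩

variable (K : Type) [Field K]

/-- Matrix (row convention: row `gB` is `(gB) · T_{k+1}`) of the Hecke generator `T_{k+1}`
(paper indexing) on `ℂ[G/B]`:
`(gB)·T_i = g s_i B + ∑_{t ≠ 0} g f_i(t) B`, where `s_i` swaps (0-based) positions `k, k+1`
and `f_i(t)` has an extra entry `t` in (0-based) position `(k+1, k)`. -/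
def genGB (k : ℕ) : Matrix (Cosets F n) (Cosets F n) K := fun C D =>
  if h : k + 1 < n then
    (if (QuotientGroup.mk (C.out * permGL F n
          (Equiv.swap ⟨k, Nat.lt_of_succ_lt h⟩ ⟨k + 1, h⟩)) : Cosets F n) = D then 1 else 0)
    + ((Finset.univ.filter fun t : F => t ≠ 0 ∧
        (QuotientGroup.mk (C.out * transvGL F n ⟨k + 1, h⟩ ⟨k, Nat.lt_of_succ_lt h⟩
          (fun hc => by simp [Fin.ext_iff] at hc) t) : Cosets F n) = D).card : K)
  else 0

/-- Matrix of the product `T_k T_{k-1} ⋯ T_1` (paper indexing) on `ℂ[G/B]`. -/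
def prodGenGB : ℕ → Matrix (Cosets F n) (Cosets F n) K
  | 0 => 1
  | k + 1 => genGB F n K k * prodGenGB k

/-- The (0-based) row index of the leading entry (the pivot `1` of the distinguished coset
representative) in the first column of a representative of the coset `C`. -/
def pivotRow (C : Cosets F n) : ℕ :=
  sInf {i : ℕ | ∃ h : i < n,
    ((C.out : GLn F n) : Matrix (Fin n) (Fin n) F) ⟨i, h⟩
      ⟨0, Nat.lt_of_le_of_lt (Nat.zero_le i) h⟩ ≠ 0}

/-- Matrix of the weighting operator `X_{G/B}(q,x)`, where `q` is the cardinality of the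
field: `gB ↦ (x_i / q^{n-i}) gB` with `i` the row index of the leading 1 in the first
column of the distinguished representative of `gB`. -/
def XGB (x : Fin n → K) : Matrix (Cosets F n) (Cosets F n) K := fun C D =>
  if D = C then
    (if h : pivotRow F n C < n then
      x ⟨pivotRow F n C, h⟩ / (Fintype.card F : K) ^ (n - 1 - pivotRow F n C)
    else 0)
  else 0

/-- Matrix of the q-Tsetlin library operator
`T_{G/B}(q,x) = (∑_{i=1}^n T_{i-1} ⋯ T_1) ∘ X_{G/B}(q,x)` on `ℂ[G/B]` (row convention). -/
def TGB (x : Fin n → K) : Matrix (Cosets F n) (Cosets F n) K :=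
  (∑ k ∈ Finset.range n, prodGenGB F n K k) * XGB F n K x

/-- The coset `gB` belongs to the double coset `[π] = B⁻ π B`. -/
def inDC (π : Equiv.Perm (Fin n)) (C : Cosets F n) : Prop :=
  ∃ l b : GLn F n, lowerTri (l : Matrix (Fin n) (Fin n) F) ∧
    upperTri (b : Matrix (Fin n) (Fin n) F) ∧
    C = QuotientGroup.mk (l * permGL F n π * b)

/-- Number of inversions of a permutation. -/
def invCount {m : ℕ} (π : Equiv.Perm (Fin m)) : ℕ :=
  (Finset.univ.filter fun p : Fin m × Fin m => p.1 < p.2 ∧ π p.2 < π p.1).card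

/-- Matrix (row convention) of the Hecke generator `T_{k+1}` (paper indexing) on `ℂS_n`. -/
def genMatP (m : ℕ) {R : Type} [Field R] (q : R) (k : ℕ) :
    Matrix (Equiv.Perm (Fin m)) (Equiv.Perm (Fin m)) R := fun π σ =>
  if h : k + 1 < m then
    if π ⟨k + 1, h⟩ < π ⟨k, Nat.lt_of_succ_lt h⟩ then
      (if σ = π * Equiv.swap ⟨k, Nat.lt_of_succ_lt h⟩ ⟨k + 1, h⟩ then q else 0)
    else
      (if σ = π * Equiv.swap ⟨k, Nat.lt_of_succ_lt h⟩ ⟨k + 1, h⟩ then 1 else 0)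
        + (if σ = π then q - 1 else 0)
  else 0

/-- Matrix of the product `T_k T_{k-1} ⋯ T_1` (paper indexing) on `ℂS_n`. -/
def prodGenP (m : ℕ) {R : Type} [Field R] (q : R) :
    ℕ → Matrix (Equiv.Perm (Fin m)) (Equiv.Perm (Fin m)) R
  | 0 => 1
  | k + 1 => genMatP m q k * prodGenP m q k

/-- Matrix of the weighting operator `X_{S_n}(q,x)`. -/
def XSnP (m : ℕ) {R : Type} [Field R] (q : R) (x : Fin m → R) :
    Matrix (Equiv.Perm (Fin m)) (Equiv.Perm (Fin m)) R := fun π σ =>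
  if σ = π then
    (if h : 0 < m then x (π ⟨0, h⟩) / q ^ (m - 1 - (π ⟨0, h⟩ : ℕ)) else 0)
  else 0

/-- Matrix of the q-Tsetlin library operator `T_{S_n}(q,x)` on `ℂS_n` (row convention). -/
def TSnP (m : ℕ) {R : Type} [Field R] (q : R) (x : Fin m → R) :
    Matrix (Equiv.Perm (Fin m)) (Equiv.Perm (Fin m)) R :=
  (∑ k ∈ Finset.range m, prodGenP m q k) * XSnP m q x

/-- The matrix of the projection `proj_{S_n} : ℂ[G/B] → ℂS_n`, `gB ↦ π` for `gB ∈ [π]`. -/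
def projMat : Matrix (Cosets F n) (Equiv.Perm (Fin n)) K := fun C π =>
  if inDC F n π C then 1 else 0

/-- The matrix of the inclusion `incl_{G/B} : ℂS_n → ℂ[G/B]`,
`π ↦ q^{inv(π)} ∑_{gB ∈ [π]} gB`. -/
def inclMat : Matrix (Equiv.Perm (Fin n)) (Cosets F n) K := fun π C =>
  if inDC F n π C then (Fintype.card F : K) ^ invCount π else 0

section BlockTriangular

variable {m R α : Type*} [Fintype m] [DecidableEq m] [CommRing R] [LinearOrder α]

/-- The invertible matrices that are block triangular with respect to `b`: a parabolic subgroup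
for each preorder of the index set induced by `b`. The opposite Borel subgroup and the minimal
parabolic subgroups are both of this form. -/
def blockTriangularSubgroup (b : m → α) : Subgroup (GL m R) where
  carrier := {g | (g : Matrix m m R).BlockTriangular b}
  one_mem' := Matrix.blockTriangular_one
  mul_mem' := Matrix.BlockTriangular.mul
  inv_mem' {g} hg := by
    have : Invertible (g : Matrix m m R) := g.invertible
    simpa only [Set.mem_ofPred_eq, Matrix.coe_units_inv] using
      Matrix.blockTriangular_inv_of_blockTriangular hg

lemma diag_ne_zero_of_mem_blockTriangularSubgroup [Nontrivial R] {b : m → α}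
    (hb : Function.Injective b) {g : GL m R} (hg : g ∈ blockTriangularSubgroup b) (i : m) :
    g.val i i ≠ 0 := by
  let : LinearOrder m := LinearOrder.lift' b hb
  have hdet : IsUnit (∏ i, g.val i i) := by
    rw [← Matrix.det_of_isUpperTriangular (M := g.val) hg]
    exact (Matrix.isUnit_iff_isUnit_det _).mp g.isUnit
  exact (isUnit_of_dvd_unit (Finset.dvd_prod_of_mem _ (Finset.mem_univ i)) hdet).ne_zero

end BlockTriangular

section LinearOrder

variable {α : Type*} [LinearOrder α] {i j : α}

lemma update_id_lt_update_id (hij : i ⋖ j) {a c : α} (hca : c < a) (h : ¬(a = j ∧ c = i)) :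
    Function.update id j i c < Function.update id j i a := by
  by_cases ha : a = j
  · subst ha
    have hci : c < i := (hij.le_of_lt hca).lt_of_ne fun hc => h ⟨rfl, hc⟩
    simpa [Function.update_of_ne hca.ne] using hci
  · by_cases hc : c = j
    · subst hc
      simpa [Function.update_of_ne ha] using hij.lt.trans hca
    · simpa [Function.update_of_ne ha, Function.update_of_ne hc] using hca

lemma monotone_update_id (hij : i ⋖ j) : Monotone (Function.update id j i) := by
  intro c a hca
  rcases hca.eq_or_lt with rfl | hca
  · exact le_rfl
  · by_cases h : a = j ∧ c = i
    · obtain ⟨rfl, rfl⟩ := h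
      simp [Function.update_of_ne hca.ne]
    · exact (update_id_lt_update_id hij hca h).le

lemma swap_lt_swap_of_covBy (hij : i ⋖ j) {a c : α} (hac : a < c) (h : ¬(a = i ∧ c = j)) :
    Equiv.swap i j a < Equiv.swap i j c := by
  have hlow : ∀ d < j, d ≠ i → d < i := fun d hd hdi => (hij.le_of_lt hd).lt_of_ne hdi
  have hhigh : ∀ d, i < d → d ≠ j → j < d := fun d hd hdj => (hij.ge_of_gt hd).lt_of_ne' hdj
  have := hij.lt
  simp only [Equiv.swap_apply_def]
  grind

lemma exists_lt_eq_or_eq_mul_swap (hij : i ≠ j) (τ : Equiv.Perm α) :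
    ∃ π : Equiv.Perm α, π i < π j ∧ (τ = π ∨ τ = π * Equiv.swap i j) := by
  rcases (τ.injective.ne hij).lt_or_gt with h | h
  · exact ⟨τ, h, .inl rfl⟩
  · exact ⟨τ * Equiv.swap i j, by simpa using h, .inr (by simp [mul_assoc])⟩

lemma perm_eq_one_of_le [WellFoundedLT α] {σ : Equiv.Perm α} (h : ∀ a, σ a ≤ a) : σ = 1 := by
  ext a
  induction a using WellFoundedLT.induction with
  | ind a ih =>
    by_contra hne
    exact hne (σ.injective (ih _ ((h a).lt_of_ne hne)))

end LinearOrder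

section Permutations

variable {n : ℕ} {i j : Fin n}

lemma mk_covBy_mk_succ {k : ℕ} (hk : k + 1 < n) :
    (⟨k, Nat.lt_of_succ_lt hk⟩ : Fin n) ⋖ ⟨k + 1, hk⟩ := by
  simp [Fin.covBy_iff]

lemma mclosure_swap_covBy :
    Submonoid.closure {σ : Equiv.Perm (Fin n) | ∃ i j, i ⋖ j ∧ σ = Equiv.swap i j} = ⊤ := by
  cases n with
  | zero => exact Subsingleton.elim _ _
  | succ n =>
    rw [eq_top_iff, ← Equiv.Perm.mclosure_swap_castSucc_succ]
    refine Submonoid.closure_mono ?_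
    rintro _ ⟨i, rfl⟩
    exact ⟨i.castSucc, i.succ, mk_covBy_mk_succ _, rfl⟩

/-- The inversion set of a permutation, whose cardinality is `invCount`. -/
def inversions (π : Equiv.Perm (Fin n)) : Finset (Fin n × Fin n) :=
  Finset.univ.filter fun p => p.1 < p.2 ∧ π p.2 < π p.1

lemma mk_mem_inversions {π : Equiv.Perm (Fin n)} {a c : Fin n} :
    (a, c) ∈ inversions π ↔ a < c ∧ π c < π a := by
  simp [inversions]

lemma invCount_mul_swap (hij : i ⋖ j) {π : Equiv.Perm (Fin n)} (hπ : π i < π j) :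
    invCount (π * Equiv.swap i j) = invCount π + 1 := by
  change (inversions (π * Equiv.swap i j)).card = (inversions π).card + 1
  have hmem : (i, j) ∈ inversions (π * Equiv.swap i j) := by
    simpa [mk_mem_inversions] using ⟨hij.lt, hπ⟩
  rw [← Finset.card_erase_add_one hmem]
  congr 1
  let f : Fin n × Fin n → Fin n × Fin n := Prod.map (Equiv.swap i j) (Equiv.swap i j)
  have hf : ∀ p, f (f p) = p := fun p => by simp [f, Prod.map]
  refine Finset.card_nbij' f f ?_ ?_ (fun p _ => hf p) (fun p _ => hf p)
  · rintro ⟨a, c⟩ hp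
    simp only [Finset.mem_coe, Finset.mem_erase, mk_mem_inversions, ne_eq, Prod.mk.injEq] at hp
    simpa [f, mk_mem_inversions] using ⟨swap_lt_swap_of_covBy hij hp.2.1 hp.1, hp.2.2⟩
  · rintro ⟨a, c⟩ hp
    simp only [Finset.mem_coe, mk_mem_inversions] at hp
    have hac : ¬(a = i ∧ c = j) := by
      rintro ⟨rfl, rfl⟩
      exact hπ.not_gt hp.2
    have hca : ¬(Equiv.swap i j a = i ∧ Equiv.swap i j c = j) := by
      rintro ⟨ha, hc⟩
      rw [Equiv.swap_apply_eq_iff, Equiv.swap_apply_left] at ha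
      rw [Equiv.swap_apply_eq_iff, Equiv.swap_apply_right] at hc
      exact hp.1.not_gt (ha ▸ hc ▸ hij.lt)
    simpa [f, mk_mem_inversions, hca] using ⟨swap_lt_swap_of_covBy hij hp.1 hac, hp.2⟩

end Permutations

section PermutationMatrices

variable {F : Type} [Field F] {n : ℕ} (π : Equiv.Perm (Fin n))

lemma permMat_mul_apply (M : Matrix (Fin n) (Fin n) F) (a c : Fin n) :
    (permMat F n π * M) a c = M (π⁻¹ a) c := by
  simp [Matrix.mul_apply, permMat, ← Equiv.Perm.eq_inv_iff_eq]

lemma mul_permMat_apply (M : Matrix (Fin n) (Fin n) F) (a c : Fin n) :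
    (M * permMat F n π) a c = M a (π c) := by
  simp [Matrix.mul_apply, permMat]

variable [Fintype F] [DecidableEq F]

variable (F n) in
/-- The embedding of the Weyl group `S_n` into `GL_n(F)` by permutation matrices. -/
def permHom : Equiv.Perm (Fin n) →* GLn F n :=
  MonoidHom.mk' (permGL F n) fun π σ => Units.ext (permMat_mul F n π σ).symm

lemma permHom_mul_transvGL {r c : Fin n} (h : r ≠ c) (t : F) :
    permHom F n π * transvGL F n r c h t =
      transvGL F n (π r) (π c) (π.injective.ne h) t * permHom F n π := by
  refine Units.ext (Matrix.ext fun a d => ?_)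
  change (permMat F n π * Matrix.transvection r c t) a d =
    (Matrix.transvection (π r) (π c) t * permMat F n π) a d
  simp [permMat_mul_apply, mul_permMat_apply, Matrix.transvection, Matrix.one_apply,
    Matrix.single_apply, Equiv.symm_apply_eq, Equiv.eq_symm_apply]

lemma permHom_mem_blockTriangularSubgroup {α : Type*} [LinearOrder α] {b : Fin n → α}
    (hπ : ∀ a, b (π a) = b a) : permHom F n π ∈ blockTriangularSubgroup b := by
  intro a c hac
  refine if_neg fun h => hac.ne ?_
  rw [← h, hπ]

end PermutationMatrices

section Transvections

variable {F : Type} [Field F] {n : ℕ}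

lemma transvGL_mem_blockTriangularSubgroup {α : Type*} [LinearOrder α] {b : Fin n → α}
    {r c : Fin n} (h : r ≠ c) (hrc : b r ≤ b c) (t : F) :
    transvGL F n r c h t ∈ blockTriangularSubgroup b :=
  Matrix.blockTriangular_transvection hrc t

end Transvections

section Generation

variable {F : Type} [Field F] [Fintype F] [DecidableEq F] {n : ℕ}

lemma permHom_mem_of_adjacent_swaps {T : Submonoid (GLn F n)}
    (hT : ∀ i j, i ⋖ j → permHom F n (Equiv.swap i j) ∈ T) (π : Equiv.Perm (Fin n)) :
    permHom F n π ∈ T := by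
  suffices h : ⊤ ≤ T.comap (permHom F n) from h (Submonoid.mem_top π)
  rw [← mclosure_swap_covBy, Submonoid.closure_le]
  rintro _ ⟨i, j, hij, rfl⟩
  exact hT i j hij

lemma transvGL_mem_of_Bsub_le {T : Submonoid (GLn F n)} (hB : (Bsub F n).toSubmonoid ≤ T)
    (hW : ∀ π, permHom F n π ∈ T) {r c : Fin n} (h : r ≠ c) (t : F) :
    transvGL F n r c h t ∈ T := by
  have hupper {r c : Fin n} (h : r < c) (t : F) : transvGL F n r c h.ne t ∈ T :=
    hB (transvGL_mem_blockTriangularSubgroup (b := id) h.ne h.le t)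
  rcases h.lt_or_gt with hrc | hrc
  · exact hupper hrc t
  · have hconj := permHom_mul_transvGL (Equiv.swap r c) h t
    rw [← eq_inv_mul_iff_mul_eq, ← map_inv] at hconj
    rw [hconj]
    refine mul_mem (hW _) (mul_mem ?_ (hW _))
    simpa using hupper hrc t

lemma submonoid_eq_top_of_Bsub_le {T : Submonoid (GLn F n)} (hB : (Bsub F n).toSubmonoid ≤ T)
    (hT : ∀ i j, i ⋖ j → permHom F n (Equiv.swap i j) ∈ T) : T = ⊤ := by
  refine (Submonoid.eq_top_iff' T).mpr fun g => ?_
  refine Matrix.diagonal_transvection_induction_of_det_ne_zero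
    (fun M => ∀ g : GLn F n, g.val = M → g ∈ T) g.val
    ((Matrix.isUnit_iff_isUnit_det _).mp g.isUnit).ne_zero ?_ ?_ ?_ g rfl
  · intro d _ g hg
    refine hB fun a c hca => ?_
    rw [hg, Matrix.diagonal_apply_ne _ hca.ne']
  · intro t g hg
    rw [show g = transvGL F n t.i t.j t.hij t.c from Units.ext hg]
    exact transvGL_mem_of_Bsub_le hB (permHom_mem_of_adjacent_swaps hT) t.hij t.c
  · intro M N hM hN ihM ihN g hg
    rw [show g = .mkOfDetNeZero M hM * .mkOfDetNeZero N hN from Units.ext hg]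
    exact mul_mem (ihM _ rfl) (ihN _ rfl)

end Generation

section MinimalParabolic

variable {F : Type} [Field F] {n : ℕ} {i j : Fin n}

variable (F) in
/-- For adjacent indices `i ⋖ j`, the minimal parabolic subgroup `B ∪ B s_i B`: invertible
matrices that are upper triangular except for an arbitrary entry in position `(j, i)`. It is
encoded by identifying `j` with `i` in the order defining block triangularity. -/
def minimalParabolic (i j : Fin n) : Subgroup (GLn F n) :=
  blockTriangularSubgroup (Function.update id j i)

lemma Bsub_le_minimalParabolic (hij : i ⋖ j) : Bsub F n ≤ minimalParabolic F i j :=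
  fun _ hg _ _ h => hg _ _ ((monotone_update_id hij).reflect_lt h)

lemma mem_Bsub_iff_of_mem_minimalParabolic (hij : i ⋖ j) {p : GLn F n}
    (hp : p ∈ minimalParabolic F i j) : p ∈ Bsub F n ↔ p.val j i = 0 := by
  refine ⟨fun h => h j i hij.lt, fun h a c hca => ?_⟩
  by_cases hac : a = j ∧ c = i
  · rwa [hac.1, hac.2]
  · exact hp (update_id_lt_update_id hij hca hac)

lemma transvGL_mem_minimalParabolic (h : j ≠ i) (t : F) :
    transvGL F n j i h t ∈ minimalParabolic F i j :=
  transvGL_mem_blockTriangularSubgroup h (by simp [Function.update_of_ne h.symm]) t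

lemma inv_transvGL_mul_mem_Bsub_iff (hij : i ⋖ j) {p : GLn F n}
    (hp : p ∈ minimalParabolic F i j) (t : F) :
    (transvGL F n j i hij.ne' t)⁻¹ * p ∈ Bsub F n ↔ p.val j i = t * p.val i i := by
  rw [mem_Bsub_iff_of_mem_minimalParabolic hij
    (mul_mem (inv_mem (transvGL_mem_minimalParabolic hij.ne' t)) hp)]
  change (Matrix.transvection j i (-t) * p.val) j i = 0 ↔ _
  rw [Matrix.transvection_mul_apply_same, neg_mul, ← sub_eq_add_neg, sub_eq_zero]

variable [Fintype F] [DecidableEq F]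

lemma permHom_swap_mem_minimalParabolic (hij : i ≠ j) :
    permHom F n (Equiv.swap i j) ∈ minimalParabolic F i j := by
  refine permHom_mem_blockTriangularSubgroup _ fun a => ?_
  simp only [Equiv.swap_apply_def, Function.update_apply, id_eq]
  grind

lemma inv_permHom_swap_mul_mem_Bsub_iff (hij : i ⋖ j) {p : GLn F n}
    (hp : p ∈ minimalParabolic F i j) :
    (permHom F n (Equiv.swap i j))⁻¹ * p ∈ Bsub F n ↔ p.val i i = 0 := by
  rw [← map_inv, Equiv.swap_inv, mem_Bsub_iff_of_mem_minimalParabolic hij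
    (mul_mem (permHom_swap_mem_minimalParabolic hij.ne) hp)]
  change (permMat F n (Equiv.swap i j) * p.val) j i = 0 ↔ _
  simp [permMat_mul_apply]

/-- The standard representatives `s_i` and `f_i(t)`, `t ∈ F`, of the cosets of `B` in a minimal
parabolic subgroup, indexed by the points `none = ∞` and `some t = t` of the projective line. -/
def parabolicRep (hij : i ⋖ j) : Option F → GLn F n
  | none => permHom F n (Equiv.swap i j)
  | some t => transvGL F n j i hij.ne' t

lemma parabolicRep_mem (hij : i ⋖ j) (r : Option F) :
    parabolicRep hij r ∈ minimalParabolic F i j :=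
  match r with
  | none => permHom_swap_mem_minimalParabolic hij.ne
  | some t => transvGL_mem_minimalParabolic hij.ne' t

/- The coset `pB` is determined by the point `p_ji / p_ii` of the projective line. -/
lemma existsUnique_inv_parabolicRep_mul_mem_Bsub (hij : i ⋖ j) {p : GLn F n}
    (hp : p ∈ minimalParabolic F i j) :
    ∃! r, (parabolicRep hij r)⁻¹ * p ∈ Bsub F n := by
  by_cases h : p.val i i = 0
  · refine ⟨none, (inv_permHom_swap_mul_mem_Bsub_iff hij hp).mpr h, ?_⟩
    rintro (_ | t) ht
    · rfl
    · rw [parabolicRep, inv_transvGL_mul_mem_Bsub_iff hij hp, h, mul_zero,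
        ← mem_Bsub_iff_of_mem_minimalParabolic hij hp] at ht
      exact absurd h
        (diag_ne_zero_of_mem_blockTriangularSubgroup (b := id) Function.injective_id ht i)
  · refine ⟨some (p.val j i / p.val i i), ?_, ?_⟩
    · exact (inv_transvGL_mul_mem_Bsub_iff hij hp _).mpr (div_mul_cancel₀ _ h).symm
    · rintro (_ | t) ht
      · exact absurd ((inv_permHom_swap_mul_mem_Bsub_iff hij hp).mp ht) h
      · rw [parabolicRep, inv_transvGL_mul_mem_Bsub_iff hij hp] at ht
        rw [ht, mul_div_cancel_right₀ _ h]

end MinimalParabolic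

section Cells

variable {F : Type} [Field F] [Fintype F] [DecidableEq F] {n : ℕ} {i j : Fin n}
  {π σ : Equiv.Perm (Fin n)} {g l b : GLn F n}

variable (F n) in
/-- The opposite Borel subgroup `B⁻` of invertible lower triangular matrices. -/
def oppositeBorel : Subgroup (GLn F n) :=
  blockTriangularSubgroup OrderDual.toDual

variable (F) in
/-- The double coset `[π] = B⁻ π B`, as a subset of `GL_n(F)`. -/
def cell (π : Equiv.Perm (Fin n)) : Set (GLn F n) :=
  DoubleCoset.doubleCoset (permHom F n π) (oppositeBorel F n) (Bsub F n)

lemma mul_mem_cell (hg : g ∈ cell F π) (hb : b ∈ Bsub F n) : g * b ∈ cell F π := by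
  obtain ⟨l, hl, c, hc, rfl⟩ := DoubleCoset.mem_doubleCoset.mp hg
  exact DoubleCoset.mem_doubleCoset.mpr ⟨l, hl, c * b, mul_mem hc hb, mul_assoc ..⟩

lemma mul_permHom_mem_cell (hl : l ∈ oppositeBorel F n) : l * permHom F n π ∈ cell F π :=
  DoubleCoset.mem_doubleCoset.mpr ⟨l, hl, 1, one_mem _, (mul_one _).symm⟩

lemma inDC_mk_iff : inDC F n π (QuotientGroup.mk g) ↔ g ∈ cell F π := by
  constructor
  · rintro ⟨l, b, hl, hb, h⟩
    have hmem : l * permHom F n π * b ∈ cell F π :=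
      DoubleCoset.mem_doubleCoset.mpr ⟨l, fun _ _ h => hl _ _ h, b, hb, rfl⟩
    have hg := mul_mem_cell hmem (QuotientGroup.eq.mp h.symm)
    rwa [show permGL F n π = permHom F n π from rfl, mul_inv_cancel_left] at hg
  · intro h
    obtain ⟨l, hl, b, hb, rfl⟩ := DoubleCoset.mem_doubleCoset.mp h
    exact ⟨l, b, fun _ _ h => hl h, hb, rfl⟩

lemma inDC_iff_out_mem_cell {C : Cosets F n} : inDC F n π C ↔ C.out ∈ cell F π := by
  rw [← inDC_mk_iff, QuotientGroup.out_eq']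

/- If `L π = σ U`, then the diagonal entries of `L` are entries of `U` in positions
`(σ⁻¹ π a, a)`, so `σ⁻¹ π a ≤ a` for all `a`. -/
lemma eq_of_mul_permHom_eq_permHom_mul (hl : l ∈ oppositeBorel F n) (hb : b ∈ Bsub F n)
    (h : l * permHom F n π = permHom F n σ * b) : π = σ := by
  suffices hle : ∀ a, (σ⁻¹ * π) a ≤ a from (inv_mul_eq_one.mp (perm_eq_one_of_le hle)).symm
  intro a
  by_contra! hlt
  have hval : l.val * permMat F n π = permMat F n σ * b.val := congrArg Units.val h
  have hentry : l.val (π a) (π a) = b.val ((σ⁻¹ * π) a) a := by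
    simpa [mul_permMat_apply, permMat_mul_apply] using congrArg (· (π a) a) hval
  rw [hb _ _ hlt] at hentry
  exact diag_ne_zero_of_mem_blockTriangularSubgroup OrderDual.toDual.injective hl _ hentry

lemma eq_of_mem_cell (hπ : g ∈ cell F π) (hσ : g ∈ cell F σ) : π = σ := by
  obtain ⟨l, hl, b, hb, rfl⟩ := DoubleCoset.mem_doubleCoset.mp hπ
  obtain ⟨l', hl', b', hb', h⟩ := DoubleCoset.mem_doubleCoset.mp hσ
  refine eq_of_mul_permHom_eq_permHom_mul (mul_mem (inv_mem hl') hl) (mul_mem hb' (inv_mem hb)) ?_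
  calc l'⁻¹ * l * permHom F n π = l'⁻¹ * (l * permHom F n π * b) * b⁻¹ := by group
    _ = permHom F n σ * (b' * b⁻¹) := by rw [h]; group

lemma mul_permHom_mul_transvGL_mem_cell (hij : i ≠ j) (hπ : π i < π j)
    (hl : l ∈ oppositeBorel F n) (t : F) :
    l * permHom F n π * transvGL F n j i hij.symm t ∈ cell F π := by
  rw [mul_assoc, permHom_mul_transvGL, ← mul_assoc]
  exact mul_permHom_mem_cell (mul_mem hl
    (transvGL_mem_blockTriangularSubgroup (b := OrderDual.toDual) _ hπ.le t))

lemma mul_permHom_mul_permHom_mem_cell (hl : l ∈ oppositeBorel F n) :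
    l * permHom F n π * permHom F n σ ∈ cell F (π * σ) := by
  rw [mul_assoc, ← map_mul]
  exact mul_permHom_mem_cell hl

lemma exists_mem_cell_of_mem_minimalParabolic (hij : i ⋖ j) (hπ : π i < π j)
    (hl : l ∈ oppositeBorel F n) (hg : (l * permHom F n π)⁻¹ * g ∈ minimalParabolic F i j) :
    ∃ τ, g ∈ cell F τ := by
  obtain ⟨r, hr, -⟩ := existsUnique_inv_parabolicRep_mul_mem_Bsub hij hg
  suffices h : ∃ τ, l * permHom F n π * parabolicRep hij r ∈ cell F τ from
    h.imp fun τ hτ => by simpa [mul_assoc] using mul_mem_cell hτ hr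
  cases r with
  | none => exact ⟨_, mul_permHom_mul_permHom_mem_cell hl⟩
  | some t => exact ⟨π, mul_permHom_mul_transvGL_mem_cell hij.ne hπ hl t⟩

lemma exists_lt_inv_mul_mem_minimalParabolic (hij : i ⋖ j) (hg : g ∈ cell F σ) :
    ∃ π : Equiv.Perm (Fin n), π i < π j ∧ (σ = π ∨ σ = π * Equiv.swap i j) ∧
      ∃ l ∈ oppositeBorel F n, (l * permHom F n π)⁻¹ * g ∈ minimalParabolic F i j := by
  obtain ⟨l, hl, b, hb, rfl⟩ := DoubleCoset.mem_doubleCoset.mp hg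
  have hb := Bsub_le_minimalParabolic hij hb
  obtain ⟨π, hπ, hσ⟩ := exists_lt_eq_or_eq_mul_swap hij.ne σ
  refine ⟨π, hπ, hσ, l, hl, ?_⟩
  rcases hσ with rfl | rfl
  · simpa [mul_assoc] using hb
  · simpa [mul_assoc] using mul_mem (permHom_swap_mem_minimalParabolic hij.ne) hb

variable (g) in
lemma exists_mem_cell : ∃ π, g ∈ cell F π := by
  let T : Submonoid (GLn F n) :=
    { carrier := {m | ∀ g, (∃ π, g ∈ cell F π) → ∃ π, g * m ∈ cell F π}
      one_mem' := fun g hg => by simpa only [mul_one] using hg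
      mul_mem' := fun hm hm' g hg => by simpa only [mul_assoc] using hm' _ (hm g hg) }
  have hB : (Bsub F n).toSubmonoid ≤ T := fun b hb g ⟨π, hg⟩ => ⟨π, mul_mem_cell hg hb⟩
  have hswap (i j : Fin n) (hij : i ⋖ j) : permHom F n (Equiv.swap i j) ∈ T := by
    rintro g ⟨σ, hg⟩
    obtain ⟨π, hπ, -, l, hl, hp⟩ := exists_lt_inv_mul_mem_minimalParabolic hij hg
    refine exists_mem_cell_of_mem_minimalParabolic hij hπ hl ?_
    rw [← mul_assoc]
    exact mul_mem hp (permHom_swap_mem_minimalParabolic hij.ne)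
  have hg : g ∈ T := submonoid_eq_top_of_Bsub_le hB hswap ▸ Submonoid.mem_top g
  have hone : (1 : GLn F n) ∈ cell F (1 : Equiv.Perm (Fin n)) := by
    simpa using mul_permHom_mem_cell (π := 1) (one_mem (oppositeBorel F n))
  simpa using hg 1 ⟨1, hone⟩

end Cells

section HeckeOperators

variable {F : Type} [Field F] [Fintype F] [DecidableEq F] {n : ℕ} {K : Type} [Field K]
  {i j : Fin n} {g : GLn F n} {C D : Cosets F n}

lemma mk_mul_parabolicRep_eq_iff (hij : i ⋖ j) (r : Option F) :
    QuotientGroup.mk (g * parabolicRep hij r) = D ↔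
      (parabolicRep hij r)⁻¹ * (g⁻¹ * D.out) ∈ Bsub F n := by
  conv_lhs => rw [← QuotientGroup.out_eq' D]
  rw [QuotientGroup.eq, mul_inv_rev, mul_assoc]

lemma sum_ite_mk_mul_parabolicRep (hij : i ⋖ j) :
    ∑ r, (if QuotientGroup.mk (g * parabolicRep hij r) = D then 1 else 0 : K) =
      if g⁻¹ * D.out ∈ minimalParabolic F i j then 1 else 0 := by
  simp only [mk_mul_parabolicRep_eq_iff]
  split_ifs with hp
  · obtain ⟨r, hr, huniq⟩ := existsUnique_inv_parabolicRep_mul_mem_Bsub hij hp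
    rw [Fintype.sum_eq_single r fun r' hr' => if_neg fun h => hr' (huniq r' h), if_pos hr]
  · refine Finset.sum_eq_zero fun r _ => if_neg fun h => hp ?_
    simpa using mul_mem (parabolicRep_mem hij r) (Bsub_le_minimalParabolic hij h)

/- The identity matrix supplies the missing term `t = 0` of the sum over `f_i(t)`. -/
lemma genGB_add_one_apply (hij : i ⋖ j) :
    (genGB F n K i + 1) C D = if C.out⁻¹ * D.out ∈ minimalParabolic F i j then 1 else 0 := by
  obtain ⟨i, hi⟩ := i
  obtain ⟨j, hj⟩ := j
  obtain rfl : i + 1 = j := by simpa [Fin.covBy_iff] using hij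
  have hzero : transvGL F n ⟨i + 1, hj⟩ ⟨i, hi⟩ hij.ne' 0 = 1 :=
    Units.ext (Matrix.transvection_zero _ _)
  have hone : (1 : Matrix (Cosets F n) (Cosets F n) K) C D =
      ∑ t : F, if t = 0 then if C = D then 1 else 0 else 0 := by
    simp [Matrix.one_apply]
  rw [← sum_ite_mk_mul_parabolicRep hij, Fintype.sum_option, Matrix.add_apply, genGB, dif_pos hj,
    Finset.natCast_card_filter, add_assoc, hone, ← Finset.sum_add_distrib]
  congr 1
  refine Finset.sum_congr rfl fun t _ => ?_
  by_cases ht : t = 0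
  · simp [ht, parabolicRep, hzero]
  · rw [if_neg ht, add_zero]
    exact if_congr (and_iff_right ht) rfl rfl

lemma genGB_add_one_mul_apply {ι : Type*} (hij : i ⋖ j)
    (hg : g⁻¹ * C.out ∈ minimalParabolic F i j) (M : Matrix (Cosets F n) ι K) (a : ι) :
    ((genGB F n K i + 1) * M : Matrix _ _ K) C a =
      ∑ r, M (QuotientGroup.mk (g * parabolicRep hij r)) a := by
  have hrow (D : Cosets F n) : (genGB F n K i + 1) C D =
      ∑ r, if QuotientGroup.mk (g * parabolicRep hij r) = D then 1 else 0 := by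
    have hD : g⁻¹ * D.out = g⁻¹ * C.out * (C.out⁻¹ * D.out) := by group
    simp only [genGB_add_one_apply hij, sum_ite_mk_mul_parabolicRep, hD, mul_mem_cancel_left hg]
  simp only [Matrix.mul_apply, hrow, Finset.sum_mul, ite_mul, one_mul, zero_mul]
  rw [Finset.sum_comm]
  simp

variable (F n K) in
lemma isSymm_genGB (k : ℕ) : (genGB F n K k).IsSymm := by
  by_cases hk : k + 1 < n
  · have hij := mk_covBy_mk_succ hk
    refine Matrix.IsSymm.ext fun C D => ?_
    have hinv : (D.out⁻¹ * C.out)⁻¹ = C.out⁻¹ * D.out := by group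
    have h : (genGB F n K k + 1) D C = (genGB F n K k + 1) C D := by
      rw [genGB_add_one_apply hij, genGB_add_one_apply hij, ← hinv, inv_mem_iff]
    simpa [Matrix.one_apply, eq_comm] using h
  · exact Matrix.IsSymm.ext fun C D => by simp [genGB, hk]

end HeckeOperators

section SymmetricGroup

variable {n : ℕ} {K : Type} [Field K] {q : K} {i j : Fin n} {π : Equiv.Perm (Fin n)}

lemma genMatP_apply_of_covBy (hij : i ⋖ j) (π σ : Equiv.Perm (Fin n)) :
    genMatP n q i π σ =
      if π j < π i then if σ = π * Equiv.swap i j then q else 0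
      else (if σ = π * Equiv.swap i j then 1 else 0) + if σ = π then q - 1 else 0 := by
  obtain ⟨i, hi⟩ := i
  obtain ⟨j, hj⟩ := j
  obtain rfl : i + 1 = j := by simpa [Fin.covBy_iff] using hij
  exact dif_pos hj

lemma genMatP_add_one_apply_of_lt (hij : i ⋖ j) (hπ : π i < π j) (σ : Equiv.Perm (Fin n)) :
    (genMatP n q i + 1) π σ =
      (if σ = π * Equiv.swap i j then 1 else 0) + if σ = π then q else 0 := by
  rw [Matrix.add_apply, genMatP_apply_of_covBy hij, if_neg hπ.not_gt, Matrix.one_apply, add_assoc]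
  simp only [eq_comm (a := π)]
  congr 1
  split_ifs <;> simp

lemma genMatP_add_one_mul_swap_apply (hij : i ⋖ j) (hπ : π i < π j) (σ : Equiv.Perm (Fin n)) :
    (genMatP n q i + 1) (π * Equiv.swap i j) σ = (genMatP n q i + 1) π σ := by
  rw [genMatP_add_one_apply_of_lt hij hπ, Matrix.add_apply, genMatP_apply_of_covBy hij,
    if_pos (by simpa using hπ), Matrix.one_apply, mul_assoc, Equiv.swap_mul_self, mul_one, add_comm]
  simp only [eq_comm (a := σ) (b := π * Equiv.swap i j)]

lemma genMatP_add_one_mul_pow_invCount (hij : i ⋖ j) (π σ : Equiv.Perm (Fin n)) :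
    (genMatP n q i + 1) π σ * q ^ invCount σ =
      if σ = π ∨ σ = π * Equiv.swap i j then
        q ^ max (invCount π) (invCount (π * Equiv.swap i j))
      else 0 := by
  obtain ⟨ρ, hρ, hπ⟩ := exists_lt_eq_or_eq_mul_swap hij.ne π
  have hne : ρ ≠ ρ * Equiv.swap i j := by simpa [eq_comm, Equiv.swap_eq_one_iff] using hij.ne
  have hrow : (genMatP n q i + 1) ρ σ * q ^ invCount σ =
      if σ = ρ ∨ σ = ρ * Equiv.swap i j then q ^ (invCount ρ + 1) else 0 := by
    rw [genMatP_add_one_apply_of_lt hij hρ]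
    by_cases h : σ = ρ
    · simp [h, hne, pow_succ']
    · by_cases h' : σ = ρ * Equiv.swap i j
      · simp [h', hne.symm, invCount_mul_swap hij hρ]
      · simp [h, h']
  rcases hπ with rfl | rfl
  · rw [hrow, invCount_mul_swap hij hρ, max_eq_right (Nat.le_succ _)]
  · rw [genMatP_add_one_mul_swap_apply hij hρ, hrow, mul_assoc, Equiv.swap_mul_self, mul_one,
      invCount_mul_swap hij hρ, max_eq_left (Nat.le_succ _)]
    simp only [or_comm]

lemma genMatP_add_one_mul_pow_invCount_comm (hij : i ⋖ j) (π σ : Equiv.Perm (Fin n)) :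
    (genMatP n q i + 1) π σ * q ^ invCount σ = (genMatP n q i + 1) σ π * q ^ invCount π := by
  have hcomm {ρ τ : Equiv.Perm (Fin n)} (h : ρ = τ ∨ ρ = τ * Equiv.swap i j) :
      τ = ρ ∨ τ = ρ * Equiv.swap i j := by
    rcases h with rfl | rfl <;> simp [mul_assoc]
  rw [genMatP_add_one_mul_pow_invCount hij, genMatP_add_one_mul_pow_invCount hij]
  by_cases h : σ = π ∨ σ = π * Equiv.swap i j
  · rw [if_pos h, if_pos (hcomm h)]
    rcases h with rfl | rfl <;> simp [mul_assoc, max_comm]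
  · rw [if_neg h, if_neg (mt hcomm h)]

/-- The matrix of the weights `q^{inv(π)}` of the permutations. -/
def invWeight (n : ℕ) (q : K) : Matrix (Equiv.Perm (Fin n)) (Equiv.Perm (Fin n)) K :=
  Matrix.diagonal fun π => q ^ invCount π

lemma isSymm_genMatP_mul_invWeight (n : ℕ) (q : K) (k : ℕ) :
    (genMatP n q k * invWeight n q).IsSymm := by
  refine Matrix.IsSymm.ext fun π σ => ?_
  simp only [invWeight, Matrix.mul_diagonal]
  by_cases hk : k + 1 < n
  · have hij := mk_covBy_mk_succ hk
    by_cases hπσ : π = σ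
    · rw [hπσ]
    · simpa [Matrix.one_apply_ne hπσ, Matrix.one_apply_ne' hπσ] using
        genMatP_add_one_mul_pow_invCount_comm (q := q) hij σ π
  · simp [genMatP, hk]

end SymmetricGroup

section Intertwining

variable {m p R : Type*} [Fintype m] [Fintype p] [CommSemiring R] {P : Matrix m p R}
  {A A' : Matrix m m R} {B B' : Matrix p p R}

/-- In the row convention, the linear map with matrix `P` intertwines the operators with matrices
`A` on its domain and `B` on its codomain. -/
def Intertwines (P : Matrix m p R) (A : Matrix m m R) (B : Matrix p p R) : Prop :=
  A * P = P * B

lemma Intertwines.one [DecidableEq m] [DecidableEq p] (P : Matrix m p R) : Intertwines P 1 1 := by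
  rw [Intertwines, Matrix.one_mul, Matrix.mul_one]

lemma Intertwines.mul (h : Intertwines P A B) (h' : Intertwines P A' B') :
    Intertwines P (A * A') (B * B') := by
  rw [Intertwines, Matrix.mul_assoc, h', ← Matrix.mul_assoc, h, Matrix.mul_assoc]

lemma Intertwines.sum {ι : Type*} {s : Finset ι} {A : ι → Matrix m m R} {B : ι → Matrix p p R}
    (h : ∀ k ∈ s, Intertwines P (A k) (B k)) :
    Intertwines P (∑ k ∈ s, A k) (∑ k ∈ s, B k) := by
  rw [Intertwines, Matrix.sum_mul, Matrix.mul_sum]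
  exact Finset.sum_congr rfl h

lemma Intertwines.mul_transpose {W : Matrix p p R} (h : Intertwines P A B) (hA : A.IsSymm)
    (hW : W.IsSymm) (hBW : (B * W).IsSymm) : Intertwines (W * P.transpose) B A :=
  calc B * (W * P.transpose) = (P * B * W).transpose := by
        rw [← Matrix.mul_assoc, ← hBW.eq, ← Matrix.transpose_mul, Matrix.mul_assoc]
    _ = (A * P * W).transpose := by rw [h]
    _ = W * P.transpose * A := by
        rw [Matrix.transpose_mul, Matrix.transpose_mul, hA.eq, hW.eq, Matrix.mul_assoc]

end Intertwining

section Weights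

variable {F : Type} [Field F] [Fintype F] {n : ℕ} {K : Type} [Field K]

lemma XGB_eq_diagonal (x : Fin n → K) :
    XGB F n K x = Matrix.diagonal fun C => if h : pivotRow F n C < n then
      x ⟨pivotRow F n C, h⟩ / (Fintype.card F : K) ^ (n - 1 - pivotRow F n C) else 0 := by
  ext C D
  simp only [XGB, Matrix.diagonal_apply, eq_comm]

lemma XSnP_eq_diagonal (q : K) (x : Fin n → K) :
    XSnP n q x = Matrix.diagonal fun π => if h : 0 < n then
      x (π ⟨0, h⟩) / q ^ (n - 1 - (π ⟨0, h⟩ : ℕ)) else 0 := by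
  ext π σ
  simp only [XSnP, Matrix.diagonal_apply, eq_comm]

end Weights

section Tsetlin

variable {F : Type} [Field F] [Fintype F] [DecidableEq F] {n : ℕ} {K : Type} [Field K]
  {π : Equiv.Perm (Fin n)} {g : GLn F n} {C : Cosets F n}

lemma projMat_mk_apply_of_mem_cell (hg : g ∈ cell F π) (τ : Equiv.Perm (Fin n)) :
    projMat F n K (QuotientGroup.mk g) τ = if τ = π then 1 else 0 := by
  have h : inDC F n τ (QuotientGroup.mk g) ↔ τ = π :=
    inDC_mk_iff.trans ⟨fun hτ => eq_of_mem_cell hτ hg, fun h => h ▸ hg⟩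
  simp only [projMat, h]

lemma projMat_mul_apply_of_out_mem_cell (hC : C.out ∈ cell F π)
    (M : Matrix (Equiv.Perm (Fin n)) (Equiv.Perm (Fin n)) K) (τ : Equiv.Perm (Fin n)) :
    (projMat F n K * M) C τ = M π τ := by
  have hrow (σ) : projMat F n K C σ = if σ = π then 1 else 0 := by
    rw [← projMat_mk_apply_of_mem_cell hC, QuotientGroup.out_eq']
  simp [Matrix.mul_apply, hrow]

variable (F n K)

lemma genGB_intertwines_projMat (k : ℕ) :
    Intertwines (projMat F n K) (genGB F n K k) (genMatP n (Fintype.card F : K) k) := by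
  by_cases hk : k + 1 < n
  · have hij := mk_covBy_mk_succ hk
    suffices h : (genGB F n K k + 1) * projMat F n K =
        projMat F n K * (genMatP n (Fintype.card F : K) k + 1) by
      rw [Matrix.add_mul, Matrix.mul_add, Matrix.one_mul, Matrix.mul_one] at h
      exact add_right_cancel h
    ext C τ
    obtain ⟨σ, hC⟩ := exists_mem_cell C.out
    obtain ⟨π, hπ, hσ, l, hl, hp⟩ := exists_lt_inv_mul_mem_minimalParabolic hij hC
    have hrow : (genMatP n (Fintype.card F : K) k + 1) σ τ =
        (genMatP n (Fintype.card F : K) k + 1) π τ := by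
      rcases hσ with rfl | rfl
      · rfl
      · exact genMatP_add_one_mul_swap_apply hij hπ τ
    rw [projMat_mul_apply_of_out_mem_cell hC, hrow, genMatP_add_one_apply_of_lt hij hπ,
      genGB_add_one_mul_apply hij hp, Fintype.sum_option]
    congr 1
    · exact projMat_mk_apply_of_mem_cell (mul_permHom_mul_permHom_mem_cell hl) τ
    · have hline (t : F) := projMat_mk_apply_of_mem_cell (K := K)
        (mul_permHom_mul_transvGL_mem_cell hij.ne hπ hl t) τ
      simp [parabolicRep, hline]
  · rw [Intertwines, show genGB F n K k = 0 by ext; simp [genGB, hk],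
      show genMatP n (Fintype.card F : K) k = 0 by ext; simp [genMatP, hk], Matrix.zero_mul,
      Matrix.mul_zero]

lemma inclMat_eq_invWeight_mul_transpose :
    inclMat F n K = invWeight n (Fintype.card F : K) * (projMat F n K).transpose := by
  ext π C
  simp [inclMat, projMat, invWeight, Matrix.diagonal_mul]

variable {F n K}

lemma Intertwines.inclMat {A : Matrix (Cosets F n) (Cosets F n) K}
    {B : Matrix (Equiv.Perm (Fin n)) (Equiv.Perm (Fin n)) K}
    (h : Intertwines (projMat F n K) A B) (hA : A.IsSymm)
    (hB : (B * invWeight n (Fintype.card F : K)).IsSymm) : Intertwines (inclMat F n K) B A := by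
  rw [inclMat_eq_invWeight_mul_transpose]
  exact h.mul_transpose hA (Matrix.isSymm_diagonal _) hB

lemma mul_permHom_mul_apply_of_isBot {l b : GLn F n} {c : Fin n} (hc : IsBot c)
    (hb : b ∈ Bsub F n) (a : Fin n) :
    (l * permHom F n π * b).val a c = l.val a (π c) * b.val c c := by
  change (l.val * permMat F n π * b.val) a c = _
  rw [Matrix.mul_apply, Fintype.sum_eq_single c, mul_permMat_apply]
  intro d hd
  rw [hb d c ((hc d).lt_of_ne' hd), mul_zero]

lemma pivotRow_eq_of_out_mem_cell (hn : 0 < n) (hC : C.out ∈ cell F π) :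
    pivotRow F n C = π ⟨0, hn⟩ := by
  obtain ⟨l, hl, b, hb, hlb⟩ := DoubleCoset.mem_doubleCoset.mp hC
  have hentry (a : Fin n) : C.out.val a ⟨0, hn⟩ = l.val a (π ⟨0, hn⟩) * b.val ⟨0, hn⟩ ⟨0, hn⟩ := by
    rw [hlb]
    exact mul_permHom_mul_apply_of_isBot (fun _ => Nat.zero_le _) hb a
  refine IsLeast.csInf_eq ⟨⟨(π ⟨0, hn⟩).isLt, ?_⟩, ?_⟩
  · refine (hentry _).trans_ne (mul_ne_zero ?_ ?_)
    · exact diag_ne_zero_of_mem_blockTriangularSubgroup OrderDual.toDual.injective hl _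
    · exact diag_ne_zero_of_mem_blockTriangularSubgroup (b := id) Function.injective_id hb _
  · rintro a ⟨ha, hne⟩
    by_contra! hlt
    refine hne ((hentry _).trans ?_)
    rw [hl hlt, zero_mul]

lemma XGB_intertwines_projMat (x : Fin n → K) :
    Intertwines (projMat F n K) (XGB F n K x) (XSnP n (Fintype.card F : K) x) := by
  rw [XGB_eq_diagonal, XSnP_eq_diagonal]
  ext C π
  rw [Matrix.diagonal_mul, Matrix.mul_diagonal]
  by_cases hC : inDC F n π C
  · rw [mul_comm]
    congr 1
    by_cases hn : 0 < n
    · simp [pivotRow_eq_of_out_mem_cell hn (inDC_iff_out_mem_cell.mp hC), hn]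
    · simp [hn, show ¬ pivotRow F n C < n by omega]
  · simp [projMat, hC]

lemma prodGenGB_intertwines_projMat (k : ℕ) :
    Intertwines (projMat F n K) (prodGenGB F n K k) (prodGenP n (Fintype.card F : K) k) := by
  induction k with
  | zero => exact .one _
  | succ k ih => exact (genGB_intertwines_projMat F n K k).mul ih

lemma prodGenP_intertwines_inclMat (k : ℕ) :
    Intertwines (inclMat F n K) (prodGenP n (Fintype.card F : K) k) (prodGenGB F n K k) := by
  induction k with
  | zero => exact .one _
  | succ k ih =>
    exact ((genGB_intertwines_projMat F n K k).inclMat (isSymm_genGB F n K k)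
      (isSymm_genMatP_mul_invWeight n _ k)).mul ih

lemma XSnP_intertwines_inclMat (x : Fin n → K) :
    Intertwines (inclMat F n K) (XSnP n (Fintype.card F : K) x) (XGB F n K x) := by
  refine (XGB_intertwines_projMat x).inclMat ?_ ?_
  · rw [XGB_eq_diagonal]
    exact Matrix.isSymm_diagonal _
  · rw [XSnP_eq_diagonal, invWeight, Matrix.diagonal_mul_diagonal]
    exact Matrix.isSymm_diagonal _

end Tsetlin

theorem qTsetlin_proj_incl_intertwine_general (F : Type) [Field F] [Fintype F] [DecidableEq F]
    (n : ℕ) (K : Type) [Field K] (_hq : (Fintype.card F : K) ≠ 0)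
    (x : Fin n → K) :
    TGB F n K x * projMat F n K =
      projMat F n K * TSnP n (Fintype.card F : K) x ∧
    TSnP n (Fintype.card F : K) x * inclMat F n K =
      inclMat F n K * TGB F n K x :=
  ⟨(Intertwines.sum fun k _ => prodGenGB_intertwines_projMat k).mul (XGB_intertwines_projMat x),
    (Intertwines.sum fun k _ => prodGenP_intertwines_inclMat k).mul (XSnP_intertwines_inclMat x)⟩

/-- Let `q` be a prime power (the cardinality of the finite field `F`) and
`x` arbitrary complex weights.  The projection and inclusion maps intertwine the q-Tsetlin
library operators on `ℂ[G/B]` and `ℂS_n` (in row-vector convention, composition of right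
operators is matrix multiplication, so these matrix identities say exactly
`proj(gB · T_{G/B}(q,x)) = proj(gB) · T_{S_n}(q,x)` for every coset `gB`, and
`incl(π · T_{S_n}(q,x)) = incl(π) · T_{G/B}(q,x)` for every permutation `π`). -/
theorem qTsetlin_proj_incl_intertwine (F : Type) [Field F] [Fintype F] [DecidableEq F]
    (n : ℕ) (x : Fin n → ℂ) :
    TGB F n ℂ x * projMat F n ℂ =
      projMat F n ℂ * TSnP n (Fintype.card F : ℂ) x ∧
    TSnP n (Fintype.card F : ℂ) x * inclMat F n ℂ =
      inclMat F n ℂ * TGB F n ℂ x :=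
  qTsetlin_proj_incl_intertwine_general F n ℂ (Nat.cast_ne_zero.mpr Fintype.card_ne_zero) x

end QTsetlin
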